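/- arXiv:2302.14559 — 2 statements merged into one kernel-verified Lean document; each statement's English description precedes it below -/
import Mathlib

section
/- Let α = (α₁,…,α_d) ∈ ℝ^d be an irrational vector and assume there exist constants H > 0 and σ ≥ d such that ‖α·m‖ ≥ H|m|^{−σ} for every m ∈ ℤ^d \ {0}. Let ϑ > 0. Then there exists a constant c > 0 such that for every R ≥ 1: ∑_{0<|m|<R} ‖α·m‖^{−ϑ} ≤ cR^{ϑσ+d(1−ϑ)} if 0 < ϑ < 1; ∑_{0<|m|<R} ‖α·m‖^{−ϑ} ≤ cR^{σ} log(R) if ϑ = 1 (with log interpreted as log(1+R)); and ∑_{0<|m|<R} ‖α·m‖^{−ϑ} ≤ cR^{ϑσ} if ϑ > 1. The sums run over m ∈ ℤ^d with 0 < |m| < R. -/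
open MeasureTheory Filter Finset
open scoped Real ENNReal Topology BigOperators

noncomputable section

/-- Distance from a real number to the nearest integer. -/
def dnint (t : ℝ) : ℝ := |t - (round t : ℝ)|

/-- Euclidean norm of an integer vector. -/
def znorm {d : ℕ} (m : Fin d → ℤ) : ℝ := Real.sqrt (∑ i, ((m i : ℝ)) ^ 2)

/-- A function on `ℝ^d` which is `ℤ^d`-periodic (i.e. a function on the torus `𝕋^d`). -/
def ZdPeriodic {d : ℕ} (f : (Fin d → ℝ) → ℂ) : Prop :=
  ∀ (x : Fin d → ℝ) (k : Fin d → ℤ), f (x + fun i => (k i : ℝ)) = f x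

/-- The unit cube, a fundamental domain of the torus `𝕋^d`. -/
def cube (d : ℕ) : Set (Fin d → ℝ) := Set.Icc 0 1

/-- Fourier coefficient of a (periodic) function. -/
def fcoef {d : ℕ} (f : (Fin d → ℝ) → ℂ) (m : Fin d → ℤ) : ℂ :=
  ∫ x in cube d,
    f x * Complex.exp (-(2 * Real.pi * Complex.I * ((∑ i, (m i : ℝ) * x i : ℝ) : ℂ)))

/-- Membership in the Sobolev space `W^{δ,2}(𝕋^d)`. -/
def MemSobolev {d : ℕ} (δ : ℝ) (f : (Fin d → ℝ) → ℂ) : Prop :=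
  Summable (fun m : Fin d → ℤ => (1 + znorm m ^ 2) ^ δ * ‖fcoef f m‖ ^ 2)

/-- The Sobolev norm `‖f‖_{δ,2}`. -/
def sobNorm {d : ℕ} (δ : ℝ) (f : (Fin d → ℝ) → ℂ) : ℝ :=
  Real.sqrt (∑' m : Fin d → ℤ, (1 + znorm m ^ 2) ^ δ * ‖fcoef f m‖ ^ 2)

/-- The kernel `∑_{n ∈ ℤ} Φ(N,n) e^{2πint}` of the summation method. -/
def kern (Φ : ℕ → ℤ → ℂ) (N : ℕ) (t : ℝ) : ℂ :=
  ∑' n : ℤ, Φ N n * Complex.exp (2 * Real.pi * Complex.I * (n : ℂ) * (t : ℂ))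

/-- The weighted discrepancy `D_N^{Φ,α} f(x)`. -/
def disc {d : ℕ} (Φ : ℕ → ℤ → ℂ) (α : Fin d → ℝ) (f : (Fin d → ℝ) → ℂ)
    (N : ℕ) (x : Fin d → ℝ) : ℂ :=
  (∑' n : ℤ, Φ N n * f (x + n • α)) - ∫ y in cube d, f y

/-- `α ∈ ℝ^d` is an irrational vector: `1, α₁, …, α_d` are linearly independent over `ℚ`. -/
def IrrationalVec {d : ℕ} (α : Fin d → ℝ) : Prop :=
  ∀ (m : Fin d → ℤ) (k : ℤ), (∑ i, (m i : ℝ) * α i) + (k : ℝ) = 0 → m = 0 ∧ k = 0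

/-! If `m ≠ n` and `0 < |m| < R`, `0 < |n| < R`, then the Diophantine condition applied to `m - n`
shows that `α·m` and `α·n`, reduced modulo `1` to `[-1/2, 1/2)`, are at distance at least
`δ = H (2R)^{-σ}` from each other, and likewise from `0`. Hence the `j`-th smallest reduced value
on either side of `0` has absolute value at least `j δ`. As there are at most `(3R)^d` such `m`,
the sum is at most `2 δ^{-ϑ} ∑_{1 ≤ j ≤ (3R)^d} j^{-ϑ}`. -/

section Separated

variable {ι : Type*} {S : Finset ι} {x : ι → ℝ} {δ : ℝ} {f : ℝ → ℝ}

lemma exists_card_mul_le_of_separated (hS : S.Nonempty) (hx : ∀ i ∈ S, δ ≤ x i)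
    (hsep : (S : Set ι).Pairwise fun i j ↦ δ ≤ |x i - x j|) :
    ∃ i ∈ S, (#S : ℝ) * δ ≤ x i := by
  classical
  induction S using Finset.induction_on_max_value x with
  | empty => simp at hS
  | insert a s ha hmax ih =>
    refine ⟨a, mem_insert_self a s, ?_⟩
    rcases s.eq_empty_or_nonempty with rfl | hs
    · simpa using hx a
    obtain ⟨b, hb, hbx⟩ := ih hs (fun i hi ↦ hx i (mem_insert_of_mem hi))
      (hsep.mono (by simp))
    have hgap : δ ≤ x a - x b := by
      rw [← abs_of_nonneg (sub_nonneg.2 (hmax b hb))]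
      exact hsep (by simp) (by simp [hb]) (ne_of_mem_of_not_mem hb ha).symm
    rw [card_insert_of_notMem ha]
    push_cast
    linarith

lemma sum_le_sum_Icc_of_separated (hδ : 0 < δ) (hf : AntitoneOn f (Set.Ioi 0))
    (hx : ∀ i ∈ S, δ ≤ x i) (hsep : (S : Set ι).Pairwise fun i j ↦ δ ≤ |x i - x j|) :
    ∑ i ∈ S, f (x i) ≤ ∑ j ∈ Icc 1 #S, f (j * δ) := by
  classical
  induction S using Finset.induction_on_max_value x with
  | empty => simp
  | insert a s ha hmax ih =>
    obtain ⟨b, hb, hbx⟩ := exists_card_mul_le_of_separated (insert_nonempty a s) hx hsep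
    have hba : x b ≤ x a := by
      rcases mem_insert.1 hb with rfl | hb
      exacts [le_rfl, hmax b hb]
    rw [card_insert_of_notMem ha] at hbx ⊢
    rw [sum_insert ha, sum_Icc_succ_top (by lia), add_comm]
    have hcard : 0 < ((#s + 1 : ℕ) : ℝ) * δ := by positivity
    exact add_le_add (ih (fun i hi ↦ hx i (mem_insert_of_mem hi)) (hsep.mono (by simp)))
      (hf hcard (hδ.trans_le (hx a (mem_insert_self a s))) (hbx.trans hba))

lemma sum_abs_le_two_mul_sum_Icc_of_separated (hδ : 0 < δ) (hf : AntitoneOn f (Set.Ioi 0))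
    (hf₀ : ∀ t, 0 < t → 0 ≤ f t) (hx : ∀ i ∈ S, δ ≤ |x i|)
    (hsep : (S : Set ι).Pairwise fun i j ↦ δ ≤ |x i - x j|) :
    ∑ i ∈ S, f |x i| ≤ 2 * ∑ j ∈ Icc 1 #S, f (j * δ) := by
  classical
  have sum_le_of_same_sign (T : Finset ι) (hTS : T ⊆ S)
      (hT : ∀ i ∈ T, ∀ j ∈ T, |(|x i| - |x j|)| = |x i - x j|) :
      ∑ i ∈ T, f |x i| ≤ ∑ j ∈ Icc 1 #S, f (j * δ) := by
    refine (sum_le_sum_Icc_of_separated hδ hf (fun i hi ↦ hx i (hTS hi)) fun i hi j hj hij ↦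
      (hsep (hTS hi) (hTS hj) hij).trans_eq (hT i hi j hj).symm).trans ?_
    refine sum_le_sum_of_subset_of_nonneg (Icc_subset_Icc_right (card_le_card hTS)) fun j hj _ ↦ ?_
    have hj : 0 < j := (mem_Icc.1 hj).1
    exact hf₀ _ (by positivity)
  rw [← sum_filter_add_sum_filter_not S (fun i ↦ 0 ≤ x i), two_mul]
  refine add_le_add (sum_le_of_same_sign _ (filter_subset _ _) fun i hi j hj ↦ ?_)
    (sum_le_of_same_sign _ (filter_subset _ _) fun i hi j hj ↦ ?_)
  · rw [abs_of_nonneg (mem_filter.1 hi).2, abs_of_nonneg (mem_filter.1 hj).2]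
  · rw [abs_of_neg (not_le.1 (mem_filter.1 hi).2), abs_of_neg (not_le.1 (mem_filter.1 hj).2),
      neg_sub_neg, abs_sub_comm]

lemma sum_abs_rpow_neg_le_of_separated {ϑ : ℝ} (hδ : 0 < δ) (hϑ : 0 ≤ ϑ)
    (hx : ∀ i ∈ S, δ ≤ |x i|) (hsep : (S : Set ι).Pairwise fun i j ↦ δ ≤ |x i - x j|) :
    ∑ i ∈ S, |x i| ^ (-ϑ) ≤ 2 * δ ^ (-ϑ) * ∑ j ∈ Icc 1 #S, (j : ℝ) ^ (-ϑ) := by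
  have hanti : AntitoneOn (fun t : ℝ ↦ t ^ (-ϑ)) (Set.Ioi 0) :=
    Real.antitoneOn_rpow_Ioi_of_exponent_nonpos (neg_nonpos.2 hϑ)
  refine (sum_abs_le_two_mul_sum_Icc_of_separated hδ hanti
    (fun t ht ↦ Real.rpow_nonneg ht.le _) hx hsep).trans_eq ?_
  simp only [Real.mul_rpow (Nat.cast_nonneg _) hδ.le, ← sum_mul]
  ring

end Separated

section PowerSums

variable {ϑ : ℝ}

lemma natCast_rpow_add_le_succ_rpow (hϑ₀ : 0 ≤ ϑ) (hϑ₁ : ϑ ≤ 1) (n : ℕ) :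
    (n : ℝ) ^ (1 - ϑ) + (1 - ϑ) * (n + 1 : ℝ) ^ (-ϑ) ≤ (n + 1 : ℝ) ^ (1 - ϑ) := by
  have hpos : (0 : ℝ) < n + 1 := by positivity
  have hinv : (n + 1 : ℝ)⁻¹ ≤ 1 := inv_le_one_of_one_le₀ (by linarith [n.cast_nonneg (α := ℝ)])
  have hbernoulli : (1 + -(n + 1 : ℝ)⁻¹) ^ (1 - ϑ) ≤ 1 + (1 - ϑ) * -(n + 1 : ℝ)⁻¹ :=
    rpow_one_add_le_one_add_mul_self (by linarith) (by linarith) (by linarith)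
  have hn : (n : ℝ) = (n + 1) * (1 + -(n + 1 : ℝ)⁻¹) := by field_simp; ring
  calc (n : ℝ) ^ (1 - ϑ) + (1 - ϑ) * (n + 1 : ℝ) ^ (-ϑ)
      = (n + 1 : ℝ) ^ (1 - ϑ) * (1 + -(n + 1 : ℝ)⁻¹) ^ (1 - ϑ)
          + (1 - ϑ) * ((n + 1 : ℝ) ^ (1 - ϑ) * (n + 1 : ℝ)⁻¹) := by
        rw [← Real.mul_rpow hpos.le (by linarith), ← hn, ← div_eq_mul_inv,
          ← Real.rpow_sub_one hpos.ne', sub_sub_cancel_left]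
    _ ≤ (n + 1 : ℝ) ^ (1 - ϑ) * (1 + (1 - ϑ) * -(n + 1 : ℝ)⁻¹)
          + (1 - ϑ) * ((n + 1 : ℝ) ^ (1 - ϑ) * (n + 1 : ℝ)⁻¹) := by gcongr
    _ = (n + 1 : ℝ) ^ (1 - ϑ) := by ring

lemma sum_Icc_rpow_neg_le (hϑ₀ : 0 ≤ ϑ) (hϑ₁ : ϑ < 1) (N : ℕ) :
    ∑ j ∈ Icc 1 N, (j : ℝ) ^ (-ϑ) ≤ (N : ℝ) ^ (1 - ϑ) / (1 - ϑ) := by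
  have hpos : 0 < 1 - ϑ := sub_pos.2 hϑ₁
  rw [le_div_iff₀ hpos]
  induction N with
  | zero => simp [Real.zero_rpow hpos.ne']
  | succ n ih =>
    rw [sum_Icc_succ_top (by lia)]
    push_cast
    linarith [natCast_rpow_add_le_succ_rpow hϑ₀ hϑ₁.le n]

lemma sum_Icc_floor_rpow_neg_one_le {y : ℝ} (hy : 1 ≤ y) :
    ∑ j ∈ Icc 1 ⌊y⌋₊, (j : ℝ) ^ (-1 : ℝ) ≤ 1 + Real.log y := by
  simpa [harmonic_eq_sum_Icc, Real.rpow_neg_one] using harmonic_floor_le_one_add_log y hy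

lemma sum_Icc_rpow_neg_le_tsum (hϑ : 1 < ϑ) (N : ℕ) :
    ∑ j ∈ Icc 1 N, (j : ℝ) ^ (-ϑ) ≤ ∑' j : ℕ, (j : ℝ) ^ (-ϑ) :=
  (Real.summable_nat_rpow.2 (neg_lt_neg hϑ)).sum_le_tsum _ fun j _ ↦ by positivity

end PowerSums

/-- The representative of `t` modulo `1` of least absolute value, so that
`dnint t = |centeredFract t|`. -/
def centeredFract (t : ℝ) : ℝ := t - round t

lemma dnint_eq_abs_centeredFract (t : ℝ) : dnint t = |centeredFract t| := rfl

lemma dnint_sub_le (s t : ℝ) : dnint (s - t) ≤ |centeredFract s - centeredFract t| := by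
  have h := round_le (s - t) (round s - round t)
  rwa [Int.cast_sub, sub_sub_sub_comm] at h

section Lattice

variable {d : ℕ}

lemma znorm_eq_norm (m : Fin d → ℤ) : znorm m = ‖WithLp.toLp 2 fun i ↦ (m i : ℝ)‖ := by
  simp [znorm, EuclideanSpace.norm_eq]

lemma znorm_pos {m : Fin d → ℤ} (hm : m ≠ 0) : 0 < znorm m := by
  rw [znorm_eq_norm, norm_pos_iff]
  contrapose! hm
  ext i
  simpa using congrFun (congrArg WithLp.ofLp hm) i

lemma znorm_sub_le (m n : Fin d → ℤ) : znorm (m - n) ≤ znorm m + znorm n := by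
  have hsub : WithLp.toLp 2 (fun i ↦ ((m - n) i : ℝ)) =
      WithLp.toLp 2 (fun i ↦ (m i : ℝ)) - WithLp.toLp 2 fun i ↦ (n i : ℝ) := by
    ext i
    simp
  simpa only [znorm_eq_norm, hsub] using norm_sub_le _ _

lemma abs_apply_le_znorm (m : Fin d → ℤ) (i : Fin d) : |(m i : ℝ)| ≤ znorm m := by
  rw [znorm_eq_norm]
  exact PiLp.norm_apply_le (WithLp.toLp 2 fun i ↦ (m i : ℝ)) i

/-- The nonzero integer vectors of Euclidean norm less than `R`: the index set of the sums. -/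
def puncturedBall (d : ℕ) (R : ℝ) : Set (Fin d → ℤ) := {m | m ≠ 0 ∧ znorm m < R}

lemma puncturedBall_subset_piFinset (d : ℕ) (R : ℝ) :
    puncturedBall d R ⊆ Fintype.piFinset fun _ : Fin d ↦ Icc (-⌊R⌋) ⌊R⌋ := by
  intro m hm
  refine mem_coe.2 (Fintype.mem_piFinset.2 fun i ↦ mem_Icc.2 ?_)
  obtain ⟨hlow, hup⟩ := abs_le.1 ((abs_apply_le_znorm m i).trans hm.2.le)
  exact ⟨neg_le.1 (Int.le_floor.2 (by push_cast; linarith)), Int.le_floor.2 hup⟩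

lemma finite_puncturedBall (d : ℕ) (R : ℝ) : (puncturedBall d R).Finite :=
  (finite_toSet _).subset (puncturedBall_subset_piFinset d R)

lemma card_puncturedBall_le (d : ℕ) {R : ℝ} (hR : 1 ≤ R) :
    #(finite_puncturedBall d R).toFinset ≤ ⌊(3 * R) ^ d⌋₊ := by
  have hfloor : 0 ≤ ⌊R⌋ := Int.floor_nonneg.2 (by linarith)
  have hside : ((#(Icc (-⌊R⌋) ⌊R⌋) : ℤ) : ℝ) = 2 * ⌊R⌋ + 1 := by
    rw [Int.card_Icc, Int.toNat_of_nonneg (by lia)]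
    push_cast
    ring
  have hside_le : (#(Icc (-⌊R⌋) ⌊R⌋) : ℝ) ≤ 3 * R := by
    rw [← Int.cast_natCast, hside]
    linarith [Int.floor_le R]
  calc #(finite_puncturedBall d R).toFinset
      ≤ #(Fintype.piFinset fun _ : Fin d ↦ Icc (-⌊R⌋) ⌊R⌋) :=
        card_le_card (Set.Finite.toFinset_subset.2 (puncturedBall_subset_piFinset d R))
    _ = #(Icc (-⌊R⌋) ⌊R⌋) ^ d := by simp
    _ ≤ ⌊(3 * R) ^ d⌋₊ := Nat.le_floor (by push_cast; gcongr)

end Lattice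

/-- The Diophantine condition `‖α·m‖ ≥ H |m|^{-σ}` for all nonzero integer vectors `m`. -/
def IsDiophantine {d : ℕ} (H σ : ℝ) (α : Fin d → ℝ) : Prop :=
  ∀ m : Fin d → ℤ, m ≠ 0 → H * znorm m ^ (-σ) ≤ dnint (∑ i, (m i : ℝ) * α i)

/-- The sum `∑_{0 < |m| < R} ‖α·m‖^{-ϑ}`, encoded as a sum over all of `ℤ^d` of a function
vanishing outside the punctured ball. -/
def smallDivisorSum {d : ℕ} (α : Fin d → ℝ) (ϑ R : ℝ) : ℝ :=
  ∑' m : Fin d → ℤ, (puncturedBall d R).indicator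
    (fun m ↦ dnint (∑ i, (m i : ℝ) * α i) ^ (-ϑ)) m

lemma smallDivisorSum_eq_sum {d : ℕ} (α : Fin d → ℝ) (ϑ R : ℝ) :
    smallDivisorSum α ϑ R =
      ∑ m ∈ (finite_puncturedBall d R).toFinset, dnint (∑ i, (m i : ℝ) * α i) ^ (-ϑ) := by
  rw [smallDivisorSum, ← _root_.tsum_subtype, ← Finset.tsum_subtype', Set.Finite.coe_toFinset]

namespace IsDiophantine

variable {d : ℕ} {α : Fin d → ℝ} {H σ ϑ R : ℝ}

lemma le_dnint (hα : IsDiophantine H σ α) (hH : 0 ≤ H) (hσ : 0 ≤ σ) {m : Fin d → ℤ}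
    (hm : m ≠ 0) (hmR : znorm m ≤ R) : H * R ^ (-σ) ≤ dnint (∑ i, (m i : ℝ) * α i) :=
  (mul_le_mul_of_nonneg_left
    (Real.rpow_le_rpow_of_nonpos (znorm_pos hm) hmR (neg_nonpos.2 hσ)) hH).trans (hα m hm)

lemma pairwise_le_abs_centeredFract_sub (hα : IsDiophantine H σ α) (hH : 0 ≤ H) (hσ : 0 ≤ σ) :
    (puncturedBall d R).Pairwise fun m n ↦ H * (2 * R) ^ (-σ) ≤
      |centeredFract (∑ i, (m i : ℝ) * α i) - centeredFract (∑ i, (n i : ℝ) * α i)| := by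
  intro m hm n hn hmn
  have hnorm : znorm (m - n) ≤ 2 * R := by linarith [znorm_sub_le m n, hm.2, hn.2]
  have hdot : ∑ i, ((m - n) i : ℝ) * α i = ∑ i, (m i : ℝ) * α i - ∑ i, (n i : ℝ) * α i := by
    simp [sub_mul]
  calc H * (2 * R) ^ (-σ) ≤ dnint (∑ i, ((m - n) i : ℝ) * α i) :=
        hα.le_dnint hH hσ (sub_ne_zero.2 hmn) hnorm
    _ ≤ _ := hdot ▸ dnint_sub_le _ _

lemma smallDivisorSum_le (hα : IsDiophantine H σ α) (hH : 0 < H) (hσ : 0 ≤ σ) (hϑ : 0 ≤ ϑ)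
    (hR : 1 ≤ R) :
    smallDivisorSum α ϑ R ≤ 2 * (H * 2 ^ (-σ)) ^ (-ϑ) * R ^ (ϑ * σ) *
      ∑ j ∈ Icc 1 ⌊(3 * R) ^ d⌋₊, (j : ℝ) ^ (-ϑ) := by
  have hR₀ : 0 < R := by linarith
  have hδ : (H * (2 * R) ^ (-σ)) ^ (-ϑ) = (H * 2 ^ (-σ)) ^ (-ϑ) * R ^ (ϑ * σ) := by
    rw [Real.mul_rpow zero_le_two hR₀.le, ← mul_assoc,
      Real.mul_rpow (by positivity) (by positivity), ← Real.rpow_mul hR₀.le, neg_mul_neg,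
      mul_comm σ]
  have hfar : ∀ m ∈ (finite_puncturedBall d R).toFinset,
      H * (2 * R) ^ (-σ) ≤ |centeredFract (∑ i, (m i : ℝ) * α i)| := by
    intro m hm
    obtain ⟨hm₀, hmR⟩ := (Set.Finite.mem_toFinset _).1 hm
    exact hα.le_dnint hH.le hσ hm₀ (by linarith)
  have hsep := hα.pairwise_le_abs_centeredFract_sub hH.le hσ (R := R)
  rw [← (finite_puncturedBall d R).coe_toFinset] at hsep
  simp only [smallDivisorSum_eq_sum, dnint_eq_abs_centeredFract]
  refine (sum_abs_rpow_neg_le_of_separated (by positivity) hϑ hfar hsep).trans ?_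
  rw [hδ, ← mul_assoc]
  gcongr
  exact card_puncturedBall_le d hR

lemma exists_smallDivisorSum_le_of_lt_one (hα : IsDiophantine H σ α) (hH : 0 < H) (hσ : 0 ≤ σ)
    (hϑ₀ : 0 ≤ ϑ) (hϑ₁ : ϑ < 1) :
    ∃ c : ℝ, 0 < c ∧ ∀ R : ℝ, 1 ≤ R →
      smallDivisorSum α ϑ R ≤ c * R ^ (ϑ * σ + d * (1 - ϑ)) := by
  have : 0 < 1 - ϑ := sub_pos.2 hϑ₁
  refine ⟨2 * (H * 2 ^ (-σ)) ^ (-ϑ) * (3 ^ (d * (1 - ϑ)) / (1 - ϑ)), by positivity,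
    fun R hR ↦ ?_⟩
  have hR₀ : 0 < R := by linarith
  have hsum : ∑ j ∈ Icc 1 ⌊(3 * R) ^ d⌋₊, (j : ℝ) ^ (-ϑ)
      ≤ 3 ^ (d * (1 - ϑ)) / (1 - ϑ) * R ^ (d * (1 - ϑ)) :=
    calc ∑ j ∈ Icc 1 ⌊(3 * R) ^ d⌋₊, (j : ℝ) ^ (-ϑ)
        ≤ (⌊(3 * R) ^ d⌋₊ : ℝ) ^ (1 - ϑ) / (1 - ϑ) := sum_Icc_rpow_neg_le hϑ₀ hϑ₁ _
      _ ≤ ((3 * R) ^ d) ^ (1 - ϑ) / (1 - ϑ) := by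
        gcongr
        exact Nat.floor_le (by positivity)
      _ = 3 ^ (d * (1 - ϑ)) / (1 - ϑ) * R ^ (d * (1 - ϑ)) := by
        rw [← Real.rpow_natCast_mul (by positivity), Real.mul_rpow zero_le_three hR₀.le]
        ring
  calc smallDivisorSum α ϑ R
      ≤ 2 * (H * 2 ^ (-σ)) ^ (-ϑ) * R ^ (ϑ * σ) *
          ∑ j ∈ Icc 1 ⌊(3 * R) ^ d⌋₊, (j : ℝ) ^ (-ϑ) := hα.smallDivisorSum_le hH hσ hϑ₀ hR
    _ ≤ 2 * (H * 2 ^ (-σ)) ^ (-ϑ) * R ^ (ϑ * σ) *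
          (3 ^ (d * (1 - ϑ)) / (1 - ϑ) * R ^ (d * (1 - ϑ))) := by gcongr
    _ = _ := by
      rw [Real.rpow_add hR₀]
      ring

lemma exists_smallDivisorSum_one_le (hα : IsDiophantine H σ α) (hH : 0 < H) (hσ : 0 ≤ σ) :
    ∃ c : ℝ, 0 < c ∧ ∀ R : ℝ, 1 ≤ R → smallDivisorSum α 1 R ≤ c * R ^ σ * Real.log (1 + R) := by
  refine ⟨2 * (H * 2 ^ (-σ)) ^ (-1 : ℝ) * (2 + 2 * d), by positivity, fun R hR ↦ ?_⟩
  have hlog_two : 1 ≤ 2 * Real.log (1 + R) := by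
    linarith [Real.log_two_gt_d9, Real.log_le_log zero_lt_two (by linarith : 2 ≤ 1 + R)]
  have hlog_three_mul : Real.log (3 * R) ≤ 2 * Real.log (1 + R) :=
    calc Real.log (3 * R) ≤ Real.log ((1 + R) ^ 2) :=
          Real.log_le_log (by positivity) (by nlinarith)
      _ = 2 * Real.log (1 + R) := by simp
  have hsum : ∑ j ∈ Icc 1 ⌊(3 * R) ^ d⌋₊, (j : ℝ) ^ (-1 : ℝ) ≤ (2 + 2 * d) * Real.log (1 + R) :=
    calc ∑ j ∈ Icc 1 ⌊(3 * R) ^ d⌋₊, (j : ℝ) ^ (-1 : ℝ) ≤ 1 + Real.log ((3 * R) ^ d) :=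
          sum_Icc_floor_rpow_neg_one_le (one_le_pow₀ (by linarith))
      _ = 1 + d * Real.log (3 * R) := by rw [Real.log_pow]
      _ ≤ 2 * Real.log (1 + R) + d * (2 * Real.log (1 + R)) := by gcongr
      _ = (2 + 2 * d) * Real.log (1 + R) := by ring
  calc smallDivisorSum α 1 R
      ≤ 2 * (H * 2 ^ (-σ)) ^ (-1 : ℝ) * R ^ (1 * σ) *
          ∑ j ∈ Icc 1 ⌊(3 * R) ^ d⌋₊, (j : ℝ) ^ (-1 : ℝ) :=
        hα.smallDivisorSum_le hH hσ zero_le_one hR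
    _ ≤ 2 * (H * 2 ^ (-σ)) ^ (-1 : ℝ) * R ^ (1 * σ) *
          ((2 + 2 * d) * Real.log (1 + R)) := by gcongr
    _ = _ := by
      rw [one_mul]
      ring

lemma exists_smallDivisorSum_le_of_one_lt (hα : IsDiophantine H σ α) (hH : 0 < H) (hσ : 0 ≤ σ)
    (hϑ : 1 < ϑ) :
    ∃ c : ℝ, 0 < c ∧ ∀ R : ℝ, 1 ≤ R → smallDivisorSum α ϑ R ≤ c * R ^ (ϑ * σ) := by
  have hzeta : 0 < ∑' j : ℕ, (j : ℝ) ^ (-ϑ) :=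
    (Real.summable_nat_rpow.2 (neg_lt_neg hϑ)).tsum_pos (fun j ↦ by positivity) 1 (by simp)
  refine ⟨2 * (H * 2 ^ (-σ)) ^ (-ϑ) * ∑' j : ℕ, (j : ℝ) ^ (-ϑ), by positivity, fun R hR ↦ ?_⟩
  calc smallDivisorSum α ϑ R
      ≤ 2 * (H * 2 ^ (-σ)) ^ (-ϑ) * R ^ (ϑ * σ) *
          ∑ j ∈ Icc 1 ⌊(3 * R) ^ d⌋₊, (j : ℝ) ^ (-ϑ) :=
        hα.smallDivisorSum_le hH hσ (by linarith) hR
    _ ≤ 2 * (H * 2 ^ (-σ)) ^ (-ϑ) * R ^ (ϑ * σ) * ∑' j : ℕ, (j : ℝ) ^ (-ϑ) := by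
      gcongr
      exact sum_Icc_rpow_neg_le_tsum hϑ _
    _ = _ := by ring

end IsDiophantine

/-- Lemma 2.2: estimates of `∑_{0<|m|<R} ‖α·m‖^{-ϑ}` under a Diophantine condition. -/
theorem stmt_13 (d : ℕ) (hd : 0 < d) (α : Fin d → ℝ) (hirr : IrrationalVec α)
    (H σ : ℝ) (hH : 0 < H) (hσ : (d : ℝ) ≤ σ)
    (hdio : ∀ m : Fin d → ℤ, m ≠ 0 →
      H * znorm m ^ (-σ) ≤ dnint (∑ i, (m i : ℝ) * α i))
    (ϑ : ℝ) (hϑ : 0 < ϑ) :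
    ∃ c : ℝ, 0 < c ∧ ∀ R : ℝ, 1 ≤ R →
      (ϑ < 1 →
        (∑' m : Fin d → ℤ, Set.indicator {m : Fin d → ℤ | m ≠ 0 ∧ znorm m < R}
            (fun m => dnint (∑ i, (m i : ℝ) * α i) ^ (-ϑ)) m)
          ≤ c * R ^ (ϑ * σ + d * (1 - ϑ))) ∧
      (ϑ = 1 →
        (∑' m : Fin d → ℤ, Set.indicator {m : Fin d → ℤ | m ≠ 0 ∧ znorm m < R}
            (fun m => dnint (∑ i, (m i : ℝ) * α i) ^ (-ϑ)) m)
          ≤ c * R ^ σ * Real.log (1 + R)) ∧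
      (1 < ϑ →
        (∑' m : Fin d → ℤ, Set.indicator {m : Fin d → ℤ | m ≠ 0 ∧ znorm m < R}
            (fun m => dnint (∑ i, (m i : ℝ) * α i) ^ (-ϑ)) m)
          ≤ c * R ^ (ϑ * σ)) := by
  have hα : IsDiophantine H σ α := hdio
  have hσ₀ : 0 ≤ σ := d.cast_nonneg.trans hσ
  rcases lt_trichotomy ϑ 1 with hlt | rfl | hgt
  · obtain ⟨c, hc, hle⟩ := hα.exists_smallDivisorSum_le_of_lt_one hH hσ₀ hϑ.le hlt
    exact ⟨c, hc, fun R hR ↦ ⟨fun _ ↦ hle R hR, fun h ↦ absurd h hlt.ne,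
      fun h ↦ absurd h hlt.not_gt⟩⟩
  · obtain ⟨c, hc, hle⟩ := hα.exists_smallDivisorSum_one_le hH hσ₀
    exact ⟨c, hc, fun R hR ↦ ⟨fun h ↦ absurd h (lt_irrefl 1), fun _ ↦ hle R hR,
      fun h ↦ absurd h (lt_irrefl 1)⟩⟩
  · obtain ⟨c, hc, hle⟩ := hα.exists_smallDivisorSum_le_of_one_lt hH hσ₀ hgt
    exact ⟨c, hc, fun R hR ↦ ⟨fun h ↦ absurd h hgt.not_gt, fun h ↦ absurd h hgt.ne',
      fun _ ↦ hle R hR⟩⟩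
end
end

section
/- For every ϑ > 0 there exist non-negative weights Φ(N,n), defined for positive integers N and integers n, such that for every N the function n ↦ Φ(N,n) has finite support and ∑_{n∈ℤ} Φ(N,n) = 1, and there exist constants K > H > 0 such that for every positive integer N and every t ∈ ℝ, H(1 + N‖t‖)^{−ϑ} ≤ ∑_{n∈ℤ} Φ(N,n) e^{2πint} ≤ K(1 + N‖t‖)^{−ϑ}. In particular the sum ∑_{n∈ℤ} Φ(N,n) e^{2πint} is real and positive for all t. -/
open MeasureTheory Filter Finset
open scoped Real ENNReal Topology BigOperators

noncomputable section

/-!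
For `0 ≤ r < 1` and `s > 0` all Taylor coefficients of `x ↦ (1 - r x) ^ (-s)` are non-negative, so
a long partial sum evaluated at `x = cos 2πt` is a trigonometric polynomial with non-negative
coefficients. Taking `r = a / (1 + a)` with `a = R² / 2` and `s = ϑ / 2`, the function
`1 - r cos 2πt` is proportional to `1 + R² sin² πt`, which is comparable to `(1 + R‖t‖)²`. This
replaces the convolution with a power of the Fejér kernel.
-/

open LaurentPolynomial
open scoped NNReal Polynomial FourierTransform

section NegativeBinomialSeries

lemma multichoose_pos {s : ℝ} (hs : 0 < s) (k : ℕ) : 0 < Ring.multichoose s k := by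
  have h : 0 < k.factorial • Ring.multichoose s k := by
    rw [Ring.factorial_nsmul_multichoose_eq_ascPochhammer, Polynomial.ascPochhammer_smeval_eq_eval]
    exact ascPochhammer_pos k s hs
  exact (nsmul_pos_iff k.factorial_ne_zero).1 h

lemma hasSum_multichoose_mul_pow (s : ℝ) {x : ℝ} (hx : |x| < 1) :
    HasSum (fun k ↦ Ring.multichoose s k * x ^ k) ((1 - x) ^ (-s)) := by
  have h := (Real.one_div_one_sub_rpow_hasFPowerSeriesOnBall_zero s).hasSum (y := x)
    (by simpa [Metric.mem_eball, edist_dist] using hx)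
  have hx' : 0 ≤ 1 - x := by linarith [(abs_lt.1 hx).2]
  simpa [FormalMultilinearSeries.ofScalars_apply_eq, mul_comm, Ring.multichoose_eq,
    Real.rpow_neg hx'] using h

end NegativeBinomialSeries

section PolynomialApproximation

lemma norm_sub_sum_le_sub_sum {ι E : Type*} [SeminormedAddCommGroup E] {f : ι → E} {g : ι → ℝ}
    {a : E} {b : ℝ} (hf : HasSum f a) (hg : HasSum g b) (hfg : ∀ i, ‖f i‖ ≤ g i)
    (S : Finset ι) : ‖a - ∑ i ∈ S, f i‖ ≤ b - ∑ i ∈ S, g i :=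
  (S.hasSum_iff_compl.1 hf).norm_le_of_bounded (S.hasSum_iff_compl.1 hg) fun i ↦ hfg i

-- The tail of the series at `x` is dominated by its tail at `r`.
lemma exists_polynomial_abs_sub_le {c : ℕ → ℝ≥0} {F : ℝ → ℝ} {r : ℝ} (hr : 0 ≤ r)
    (hF : ∀ x, |x| ≤ r → HasSum (fun k ↦ c k * x ^ k) (F x)) {ε : ℝ} (hε : 0 < ε) :
    ∃ p : ℝ≥0[X], ∀ x, |x| ≤ r → |F x - p.eval₂ NNReal.toRealHom x| ≤ ε := by
  have hFr := hF r (abs_of_nonneg hr).le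
  obtain ⟨M, hM⟩ := (hFr.tendsto_sum_nat.eventually_const_lt (sub_lt_self (F r) hε)).exists
  refine ⟨∑ k ∈ range M, Polynomial.monomial k (c k), fun x hx ↦ ?_⟩
  have hterm (k : ℕ) : ‖c k * x ^ k‖ ≤ c k * r ^ k := by
    rw [norm_mul, NNReal.norm_eq, norm_pow, Real.norm_eq_abs]
    gcongr
  have htail := norm_sub_sum_le_sub_sum (hF x hx) hFr hterm (range M)
  simp only [Polynomial.eval₂_finsetSum, Polynomial.eval₂_monomial, NNReal.coe_toRealHom]
  exact htail.trans (by linarith)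

lemma exists_polynomial_comparable_one_sub_rpow {s r : ℝ} (hs : 0 < s) (hr : 0 ≤ r) (hr1 : r < 1) :
    ∃ p : ℝ≥0[X], ∀ x, |x| ≤ r →
      1 / 2 * (1 - x) ^ (-s) ≤ p.eval₂ NNReal.toRealHom x ∧
        p.eval₂ NNReal.toRealHom x ≤ 3 / 2 * (1 - x) ^ (-s) := by
  let c (k : ℕ) : ℝ≥0 := ⟨Ring.multichoose s k, (multichoose_pos hs k).le⟩
  obtain ⟨p, hp⟩ := exists_polynomial_abs_sub_le (c := c) hr
    (fun x hx ↦ hasSum_multichoose_mul_pow s (hx.trans_lt hr1))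
    (ε := 1 / 2 * 2 ^ (-s)) (by positivity)
  refine ⟨p, fun x hx ↦ ?_⟩
  have hx1 := abs_lt.1 (hx.trans_lt hr1)
  have hmin : (2 : ℝ) ^ (-s) ≤ (1 - x) ^ (-s) :=
    Real.rpow_le_rpow_of_nonpos (by linarith) (by linarith) (by linarith)
  have hpx := abs_le.1 (hp x hx)
  constructor <;> linarith

lemma one_sub_div_one_add_mul {a : ℝ} (ha : 0 ≤ a) (x : ℝ) :
    1 - a / (1 + a) * x = (1 + a)⁻¹ * (1 + a * (1 - x)) := by
  field_simp
  ring

-- Take `q x = p (r x) / p r` with `r = a / (1 + a)` and `p` comparable to `(1 - x) ^ (-s)` on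
-- `[-r, r]`.
lemma exists_polynomial_comparable_one_add_mul_rpow {s : ℝ} (hs : 0 < s) (a : ℝ≥0) :
    ∃ q : ℝ≥0[X], q.eval 1 = 1 ∧ ∀ x : ℝ, |x| ≤ 1 →
      1 / 3 * (1 + a * (1 - x)) ^ (-s) ≤ q.eval₂ NNReal.toRealHom x ∧
        q.eval₂ NNReal.toRealHom x ≤ 3 * (1 + a * (1 - x)) ^ (-s) := by
  let r : ℝ≥0 := a / (1 + a)
  have hr (x : ℝ) : 1 - r * x = (1 + (a : ℝ))⁻¹ * (1 + a * (1 - x)) :=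
    one_sub_div_one_add_mul a.coe_nonneg x
  have hr_one : 1 - (r : ℝ) = (1 + (a : ℝ))⁻¹ := by simpa using hr 1
  have hinv_pos : 0 < (1 + (a : ℝ))⁻¹ := by positivity
  obtain ⟨p, hp⟩ :=
    exists_polynomial_comparable_one_sub_rpow hs r.coe_nonneg (by linarith : (r : ℝ) < 1)
  obtain ⟨hpr_lower, hpr_upper⟩ := hp r (NNReal.abs_eq r).le
  rw [← NNReal.coe_toRealHom, Polynomial.eval₂_at_apply, NNReal.coe_toRealHom, hr_one]
    at hpr_lower hpr_upper
  have hpr_pos : 0 < ((p.eval r : ℝ≥0) : ℝ) :=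
    lt_of_lt_of_le (mul_pos one_half_pos (Real.rpow_pos_of_pos hinv_pos _)) hpr_lower
  refine ⟨Polynomial.C (p.eval r)⁻¹ * p.comp (Polynomial.C r * Polynomial.X), ?_, fun x hx ↦ ?_⟩
  · simpa using inv_mul_cancel₀ (NNReal.coe_pos.1 hpr_pos).ne'
  have hbase : 0 ≤ 1 + a * (1 - x) := by nlinarith [(abs_le.1 hx).2, a.coe_nonneg]
  have hrx : |r * x| ≤ r := by
    rw [abs_mul, NNReal.abs_eq]
    exact mul_le_of_le_one_right r.coe_nonneg hx
  obtain ⟨hprx_lower, hprx_upper⟩ := hp (r * x) hrx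
  rw [hr, Real.mul_rpow hinv_pos.le hbase] at hprx_lower hprx_upper
  have hw : 0 ≤ (1 + a * (1 - x)) ^ (-s) := Real.rpow_nonneg hbase _
  simp only [Polynomial.eval₂_mul, Polynomial.eval₂_C, Polynomial.eval₂_comp, Polynomial.eval₂_X,
    NNReal.coe_toRealHom, NNReal.coe_inv]
  rw [inv_mul_eq_div, le_div_iff₀ hpr_pos, div_le_iff₀ hpr_pos]
  constructor
  · linarith [mul_le_mul_of_nonneg_right hpr_upper hw]
  · linarith [mul_le_mul_of_nonneg_right hpr_lower hw]

end PolynomialApproximation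

section TrigonometricPolynomial

lemma laurent_eval₂_eq_sum {R S : Type*} [CommSemiring R] [CommSemiring S] (f : R →+* S) (x : Sˣ)
    (φ : R[T;T⁻¹]) : eval₂ f x φ = φ.coeff.sum fun n a ↦ f a * (x ^ n : Sˣ) := by
  induction φ using AddMonoidAlgebra.induction_linear with
  | zero => simp
  | add φ ψ hφ hψ =>
    rw [map_add, hφ, hψ, AddMonoidAlgebra.coeff_add, Finsupp.sum_add_index'] <;> simp [add_mul]
  | single n a =>
    rw [single_eq_C_mul_T, eval₂_C_mul_T, ← single_eq_C_mul_T, AddMonoidAlgebra.coeff_single,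
      Finsupp.sum_single_index (by simp)]

/-- The value `∑ₙ φₙ e^{2πint}` of the trigonometric polynomial with non-negative Fourier
coefficients `φₙ`. The coefficients are stored as a Laurent polynomial over `ℝ≥0`, so that
non-negativity is preserved by sums and products. -/
def trigEval (t : ℝ) : ℝ≥0[T;T⁻¹] →+* ℂ :=
  eval₂ (Complex.ofRealHom.comp NNReal.toRealHom) (Circle.toUnits (𝐞 t))

lemma trigEval_C (t : ℝ) (a : ℝ≥0) : trigEval t (C a) = (a : ℝ) := eval₂_C _ _ _

lemma trigEval_T (t : ℝ) (n : ℤ) : trigEval t (T n) = Complex.exp (2 * π * Complex.I * n * t) := by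
  rw [trigEval, eval₂_T, Units.val_zpow_eq_zpow_val, Circle.toUnits_apply, Units.val_mk0,
    Real.fourierChar_apply, ← Complex.exp_int_mul]
  push_cast
  ring_nf

lemma hasSum_trigEval (t : ℝ) (φ : ℝ≥0[T;T⁻¹]) :
    HasSum (fun n : ℤ ↦ ((φ.coeff n : ℝ) : ℂ) * Complex.exp (2 * π * Complex.I * n * t))
      (trigEval t φ) := by
  simp only [← trigEval_T]
  simp only [trigEval, eval₂_T]
  rw [laurent_eval₂_eq_sum, Finsupp.sum]
  refine hasSum_sum_of_ne_finset_zero fun n hn ↦ ?_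
  simp [Finsupp.notMem_support_iff.1 hn]

/-- The trigonometric polynomial `cos 2πt`, as half the sum of `e^{2πit}` and `e^{-2πit}`. -/
def cosLaurent : ℝ≥0[T;T⁻¹] := C (1 / 2) * (T 1 + T (-1))

lemma trigEval_cosLaurent (t : ℝ) : trigEval t cosLaurent = Real.cos (2 * π * t) := by
  rw [Complex.ofReal_cos, Complex.cos, cosLaurent, map_mul, map_add, trigEval_C, trigEval_T,
    trigEval_T]
  push_cast
  ring_nf

lemma trigEval_eval₂_cosLaurent (t : ℝ) (q : ℝ≥0[X]) :
    trigEval t (q.eval₂ C cosLaurent) = (q.eval₂ NNReal.toRealHom (Real.cos (2 * π * t)) : ℝ) := by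
  have hC : (trigEval t).comp C = Complex.ofRealHom.comp NNReal.toRealHom :=
    RingHom.ext (trigEval_C t)
  rw [Polynomial.hom_eval₂, hC, trigEval_cosLaurent, ← Complex.ofRealHom_eq_coe,
    ← Complex.ofRealHom_eq_coe, Polynomial.hom_eval₂]

end TrigonometricPolynomial

section NearestInteger

lemma dnint_nonneg (t : ℝ) : 0 ≤ dnint t := abs_nonneg _

lemma abs_sin_pi_mul_sub_int (t : ℝ) (n : ℤ) : |Real.sin (π * (t - n))| = |Real.sin (π * t)| := by
  rw [mul_sub, mul_comm π (n : ℝ), Real.sin_sub_int_mul_pi, abs_mul, abs_neg_one_zpow, one_mul]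

lemma two_mul_dnint_le_abs_sin (t : ℝ) : 2 * dnint t ≤ |Real.sin (π * t)| := by
  have hle : |π * (t - round t)| ≤ π / 2 := by
    rw [abs_mul, abs_of_pos Real.pi_pos]
    nlinarith [abs_sub_round t, Real.pi_pos]
  calc 2 * dnint t = 2 / π * |π * (t - round t)| := by
        rw [abs_mul, abs_of_pos Real.pi_pos, dnint]; field_simp
    _ ≤ |Real.sin (π * (t - round t))| := Real.mul_abs_le_abs_sin hle
    _ = |Real.sin (π * t)| := abs_sin_pi_mul_sub_int t _

lemma abs_sin_le_pi_mul_dnint (t : ℝ) : |Real.sin (π * t)| ≤ π * dnint t := by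
  calc |Real.sin (π * t)| = |Real.sin (π * (t - round t))| := (abs_sin_pi_mul_sub_int t _).symm
    _ ≤ |π * (t - round t)| := Real.abs_sin_le_abs
    _ = π * dnint t := by rw [abs_mul, abs_of_pos Real.pi_pos, dnint]

lemma sq_le_one_add_sq_mul_sin_sq {R : ℝ} (hR : 0 ≤ R) (t : ℝ) :
    ((1 + R * dnint t) / 2) ^ 2 ≤ 1 + R ^ 2 * Real.sin (π * t) ^ 2 := by
  have h := mul_le_mul_of_nonneg_left (two_mul_dnint_le_abs_sin t) hR
  rw [← sq_abs (Real.sin _), ← mul_pow]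
  nlinarith [mul_nonneg hR (dnint_nonneg t), sq_nonneg (R * dnint t - 1)]

lemma one_add_sq_mul_sin_sq_le_sq {R : ℝ} (hR : 0 ≤ R) (t : ℝ) :
    1 + R ^ 2 * Real.sin (π * t) ^ 2 ≤ (π * (1 + R * dnint t)) ^ 2 := by
  have h := mul_le_mul_of_nonneg_left (abs_sin_le_pi_mul_dnint t) hR
  have hu := mul_nonneg hR (dnint_nonneg t)
  have hsq := pow_le_pow_left₀ (by positivity) h 2
  rw [← sq_abs (Real.sin _), ← mul_pow]
  calc 1 + (R * |Real.sin (π * t)|) ^ 2 ≤ π ^ 2 + (π * (R * dnint t)) ^ 2 := by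
        nlinarith [Real.pi_gt_three]
    _ ≤ (π * (1 + R * dnint t)) ^ 2 := by nlinarith [Real.pi_gt_three]

end NearestInteger

lemma sq_rpow_neg_half {u : ℝ} (hu : 0 ≤ u) (ϑ : ℝ) : (u ^ 2) ^ (-(ϑ / 2)) = u ^ (-ϑ) := by
  rw [← Real.rpow_natCast_mul hu]; congr 1; push_cast; ring

lemma one_add_sq_mul_sin_sq_rpow_comparable {R ϑ : ℝ} (hR : 0 ≤ R) (hϑ : 0 ≤ ϑ) (t : ℝ) :
    π ^ (-ϑ) * (1 + R * dnint t) ^ (-ϑ) ≤ (1 + R ^ 2 * Real.sin (π * t) ^ 2) ^ (-(ϑ / 2)) ∧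
      (1 + R ^ 2 * Real.sin (π * t) ^ 2) ^ (-(ϑ / 2)) ≤ 2 ^ ϑ * (1 + R * dnint t) ^ (-ϑ) := by
  have hu : 0 < 1 + R * dnint t := by linarith [mul_nonneg hR (dnint_nonneg t)]
  have hexp : -(ϑ / 2) ≤ 0 := by linarith
  constructor
  · rw [← Real.mul_rpow Real.pi_pos.le hu.le, ← sq_rpow_neg_half (by positivity)]
    exact Real.rpow_le_rpow_of_nonpos (by positivity) (one_add_sq_mul_sin_sq_le_sq hR t) hexp
  · calc (1 + R ^ 2 * Real.sin (π * t) ^ 2) ^ (-(ϑ / 2))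
        ≤ (((1 + R * dnint t) / 2) ^ 2) ^ (-(ϑ / 2)) :=
          Real.rpow_le_rpow_of_nonpos (by positivity) (sq_le_one_add_sq_mul_sin_sq hR t) hexp
      _ = 2 ^ ϑ * (1 + R * dnint t) ^ (-ϑ) := by
          rw [sq_rpow_neg_half (by positivity), Real.div_rpow hu.le zero_le_two,
            Real.rpow_neg zero_le_two, div_inv_eq_mul, mul_comm]

lemma exists_laurent_comparable {s : ℝ} (hs : 0 < s) (R : ℝ) :
    ∃ φ : ℝ≥0[T;T⁻¹], trigEval 0 φ = 1 ∧ ∀ t, ∃ y : ℝ, trigEval t φ = y ∧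
      1 / 3 * (1 + R ^ 2 * Real.sin (π * t) ^ 2) ^ (-s) ≤ y ∧
        y ≤ 3 * (1 + R ^ 2 * Real.sin (π * t) ^ 2) ^ (-s) := by
  obtain ⟨q, hq_one, hq⟩ :=
    exists_polynomial_comparable_one_add_mul_rpow hs ⟨R ^ 2 / 2, by positivity⟩
  refine ⟨q.eval₂ C cosLaurent, ?_, fun t ↦ ⟨_, trigEval_eval₂_cosLaurent t q, ?_⟩⟩
  · rw [trigEval_eval₂_cosLaurent, mul_zero, Real.cos_zero, ← map_one NNReal.toRealHom,
      Polynomial.eval₂_at_apply, hq_one, map_one, Complex.ofReal_one]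
  · have hcos : R ^ 2 / 2 * (1 - Real.cos (2 * π * t)) = R ^ 2 * Real.sin (π * t) ^ 2 := by
      rw [mul_assoc, Real.cos_two_mul, Real.cos_sq']; ring
    rw [← hcos]
    exact hq _ (Real.abs_cos_le_one _)

theorem stmt_19_general {ϑ : ℝ} (hϑ : 0 < ϑ) :
    ∃ Φ : ℝ → ℤ → ℝ,
      (∀ R n, 0 ≤ Φ R n) ∧
      (∀ R, (Function.support (Φ R)).Finite) ∧
      (∀ R, ∑' n, Φ R n = 1) ∧
      ∃ K H : ℝ, 0 < H ∧ H < K ∧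
        ∀ R, 0 ≤ R → ∀ t : ℝ,
          (∑' n : ℤ, (Φ R n : ℂ) * Complex.exp (2 * π * Complex.I * n * t)).im = 0 ∧
          H * (1 + R * dnint t) ^ (-ϑ)
            ≤ (∑' n : ℤ, (Φ R n : ℂ) * Complex.exp (2 * π * Complex.I * n * t)).re ∧
          (∑' n : ℤ, (Φ R n : ℂ) * Complex.exp (2 * π * Complex.I * n * t)).re
            ≤ K * (1 + R * dnint t) ^ (-ϑ) := by
  choose φ hφ_zero y hy hlower hupper using exists_laurent_comparable (half_pos hϑ)
  refine ⟨fun R n ↦ (φ R).coeff n, fun R n ↦ NNReal.coe_nonneg _, fun R ↦ ?_, fun R ↦ ?_,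
    3 * 2 ^ ϑ, 1 / 3 * π ^ (-ϑ), by positivity, ?_, fun R hR t ↦ ?_⟩
  · exact (φ R).coeff.hasFiniteSupport.subset fun n ↦ by simp
  · have h := (hasSum_trigEval 0 (φ R)).tsum_eq
    simp only [hφ_zero, Complex.ofReal_zero, mul_zero, Complex.exp_zero, mul_one] at h
    rw [← Complex.ofReal_tsum] at h
    exact Complex.ofReal_eq_one.1 h
  · have hpi : π ^ (-ϑ) ≤ 1 :=
      Real.rpow_le_one_of_one_le_of_nonpos (by linarith [Real.pi_gt_three]) (by linarith)
    have htwo : (1 : ℝ) ≤ 2 ^ ϑ := Real.one_le_rpow one_le_two hϑ.le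
    linarith
  · obtain ⟨hsin_lower, hsin_upper⟩ := one_add_sq_mul_sin_sq_rpow_comparable hR hϑ.le t
    rw [(hasSum_trigEval t (φ R)).tsum_eq, hy]
    refine ⟨Complex.ofReal_im _, ?_, ?_⟩ <;> rw [Complex.ofReal_re]
    · linarith [hlower R t]
    · linarith [hupper R t]

/-- Remark 3.1: for every `ϑ > 0` there exist non-negative weights whose kernel is real,
positive, and comparable to `(1+N‖t‖)^{-ϑ}` from above and below. -/
theorem stmt_19 (ϑ : ℝ) (hϑ : 0 < ϑ) :
    ∃ Φ : ℕ → ℤ → ℝ,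
      (∀ (N : ℕ) (n : ℤ), 0 ≤ Φ N n) ∧
      (∀ N : ℕ, 1 ≤ N → (Function.support (Φ N)).Finite) ∧
      (∀ N : ℕ, 1 ≤ N → ∑' n : ℤ, Φ N n = 1) ∧
      ∃ K H : ℝ, 0 < H ∧ H < K ∧
        ∀ N : ℕ, 1 ≤ N → ∀ t : ℝ,
          (kern (fun N n => ((Φ N n : ℝ) : ℂ)) N t).im = 0 ∧
          H * (1 + (N : ℝ) * dnint t) ^ (-ϑ)
            ≤ (kern (fun N n => ((Φ N n : ℝ) : ℂ)) N t).re ∧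
          (kern (fun N n => ((Φ N n : ℝ) : ℂ)) N t).re
            ≤ K * (1 + (N : ℝ) * dnint t) ^ (-ϑ) := by
  obtain ⟨Φ, hΦ_nonneg, hΦ_supp, hΦ_sum, K, H, hH, hHK, hbounds⟩ := stmt_19_general hϑ
  exact ⟨fun N ↦ Φ N, fun N ↦ hΦ_nonneg N, fun N _ ↦ hΦ_supp N, fun N _ ↦ hΦ_sum N,
    K, H, hH, hHK, fun N _ ↦ hbounds N N.cast_nonneg⟩
end
end
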